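/- If the critical point c of a tent map T is recurrent with infinite orbit, then the set of endpoints of the core inverse limit space X′ is uncountable; moreover it has no isolated points and is dense in the set of folding points. -/

import Mathlib

open Set Filter Topology

/-- The inverse limit `lim←(K, T)`, as the space of backward orbits. -/
abbrev InvLim (T : ℝ → ℝ) (K : Set ℝ) :=
  {x : ℕ → ℝ // (∀ n, x n ∈ K) ∧ ∀ n, T (x (n + 1)) = x n}

/-- A point `x` is an endpoint if for any two subcontinua `A`, `B` containing `x`,
either `A ⊆ B` or `B ⊆ A`. -/
def IsEndpointPt {Z : Type*} [TopologicalSpace Z] (x : Z) : Prop :=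
  ∀ A B : Set Z, IsCompact A → IsConnected A → IsCompact B → IsConnected B →
    x ∈ A → x ∈ B → A ⊆ B ∨ B ⊆ A

/-- The ω-limit set of `c` under `T`. -/
def omegaSet (T : ℝ → ℝ) (c : ℝ) : Set ℝ :=
  {y | ∃ φ : ℕ → ℕ, StrictMono φ ∧
    Filter.Tendsto (fun n => T^[φ n] c) Filter.atTop (nhds y)}

/-! A folding point whose coordinates come infinitely often, and quickly enough, close to the
maximum `T c` of the core is an endpoint: if `A`, `B` are subcontinua through it, then `a ∈ A \ B`
and `b ∈ B \ A` infinitely often project to its left, so that the interval projection of one of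
`A`, `B` contains the projection of the other's point. Such points form a `G_δ` in `F`, which is
dense because recurrence lets every folding point be approximated by ones passing through `T c` at
a late time; as the orbit of `c` is infinite, `F` is moreover perfect, so Baire's theorem makes
the endpoints in `F` dense and uncountable. Conversely, if `x n ∉ ω(c)`, then an interval around
`x n` misses the closed invariant set `ω(c)`. Both ends of the core lie in `ω(c)`, so the interval
lifts along the inverse branches followed by `x` without leaving the core, and `x` is interior to
an arc. -/

section Residual

theorem not_countable_of_mem_residual {X : Type*} [TopologicalSpace X] [T1Space X] [BaireSpace X]
    [PerfectSpace X] [Nonempty X] {s : Set X} (hs : s ∈ residual X) : ¬ s.Countable := by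
  intro hcount
  have hcompl : ⋂ x ∈ s, ({x}ᶜ : Set X) ∈ residual X :=
    (countable_bInter_mem hcount).2 fun x _ =>
      residual_of_dense_open isOpen_compl_singleton (dense_compl_singleton x)
  obtain ⟨x, hx, hx'⟩ := (dense_of_mem_residual (inter_mem hs hcompl)).nonempty
  exact mem_iInter₂.1 hx' x hx rfl

theorem mem_closure_diff_singleton_of_dense {Z : Type*} [TopologicalSpace Z] {E F : Set Z}
    [T1Space F] [PerfectSpace F] (hE : Dense ((↑) ⁻¹' E : Set F)) {x : Z} (hx : x ∈ F) :
    x ∈ closure (E \ {x}) := by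
  refine closure_mono ?_ (closure_subtype.1 (hE.sdiff_singleton ⟨x, hx⟩ ⟨x, hx⟩))
  rintro _ ⟨y, ⟨hyE, hyx⟩, rfl⟩
  exact ⟨hyE, fun h => hyx (Subtype.ext h)⟩

end Residual

section OmegaSet

variable {T : ℝ → ℝ} {K : Set ℝ} {c : ℝ}

theorem mem_omegaSet_iff_mapClusterPt {y : ℝ} :
    y ∈ omegaSet T c ↔ MapClusterPt y atTop fun n => T^[n] c :=
  ⟨fun ⟨_, hφ, h⟩ => MapClusterPt.of_comp hφ.tendsto_atTop h.mapClusterPt,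
    MapClusterPt.tendsto_subseq⟩

theorem isClosed_omegaSet : IsClosed (omegaSet T c) := by
  have : omegaSet T c = {y | ClusterPt y (map (fun n => T^[n] c) atTop)} :=
    Set.ext fun _ => mem_omegaSet_iff_mapClusterPt
  exact this ▸ isClosed_setOfPred_clusterPt

theorem mapsTo_omegaSet (hT : Continuous T) : MapsTo T (omegaSet T c) (omegaSet T c) := by
  rintro y ⟨φ, hφ, h⟩
  refine ⟨fun n => φ n + 1, hφ.add_const 1, ?_⟩
  simp only [Function.iterate_succ_apply']
  exact (hT.tendsto y).comp h

theorem omegaSet_subset (hK : IsClosed K) (hcK : ∀ n, T^[n] c ∈ K) : omegaSet T c ⊆ K := by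
  rintro y ⟨φ, -, h⟩
  exact hK.mem_of_tendsto h (Eventually.of_forall fun n => hcK (φ n))

theorem surjOn_omegaSet (hT : Continuous T) (hK : IsCompact K) (hcK : ∀ n, T^[n] c ∈ K) :
    SurjOn T (omegaSet T c) (omegaSet T c) := by
  rintro y ⟨φ, hφ, hy⟩
  obtain ⟨z, -, ψ, hψ, hz⟩ := hK.tendsto_subseq fun n => hcK (φ (n + 1) - 1)
  have hpos : ∀ n, 0 < φ (n + 1) := fun n => (Nat.zero_le _).trans_lt (hφ n.lt_succ_self)
  refine ⟨z, ⟨fun n => φ (ψ n + 1) - 1, fun m n hmn => ?_, hz⟩, ?_⟩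
  · have := hφ (Nat.succ_lt_succ (hψ hmn))
    have := hpos (ψ m)
    grind
  · have hlim : Tendsto (fun n => T^[φ (ψ n + 1)] c) atTop (𝓝 y) :=
      hy.comp ((tendsto_add_atTop_nat 1).comp hψ.tendsto_atTop)
    refine tendsto_nhds_unique ((hT.tendsto z).comp hz) (hlim.congr fun n => ?_)
    simp only [Function.comp_apply]
    rw [← Function.iterate_succ_apply' T, Nat.succ_eq_add_one, Nat.sub_add_cancel (hpos _)]

end OmegaSet

theorem exists_seq_lt_forall_dist_iterate_lt {T : ℝ → ℝ} (hT : Continuous T) (b : ℝ) :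
    ∃ t : ℕ → ℝ, (∀ m, t m < b) ∧
      ∀ m, ∀ y ∈ Ioc (t m) b, ∀ k ≤ m, dist (T^[k] y) (T^[k] b) < 1 / ((m : ℝ) + 1) := by
  have hnear (m : ℕ) :
      ∀ᶠ y in 𝓝[≤] b, ∀ k ∈ Iic m, dist (T^[k] y) (T^[k] b) < 1 / ((m : ℝ) + 1) :=
    (eventually_all_finite (finite_Iic m)).2 fun k _ =>
      nhdsWithin_le_nhds (Metric.tendsto_nhds.1 (hT.iterate k).continuousAt _ (by positivity))
  choose t htb ht using fun m => mem_nhdsLE_iff_exists_Ioc_subset.1 (hnear m)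
  exact ⟨t, htb, fun m y hy k hk => ht m hy k hk⟩

namespace InvLim

variable {T : ℝ → ℝ} {K : Set ℝ}

theorem continuous_eval (n : ℕ) : Continuous fun x : InvLim T K => x.1 n :=
  (continuous_apply n).comp continuous_subtype_val

theorem iterate_apply_add (x : InvLim T K) (n k : ℕ) : T^[k] (x.1 (n + k)) = x.1 n := by
  induction k with
  | zero => rfl
  | succ k ih => rw [Function.iterate_succ_apply, ← add_assoc, x.2.2, ih]

theorem iterate_sub_apply (x : InvLim T K) {n m : ℕ} (h : n ≤ m) :
    T^[m - n] (x.1 m) = x.1 n := by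
  simpa only [Nat.add_sub_cancel' h] using x.iterate_apply_add n (m - n)

theorem compactSpace (hT : Continuous T) (hK : IsCompact K) : CompactSpace (InvLim T K) := by
  have hclosed : IsClosed {x : ℕ → ℝ | (∀ n, x n ∈ K) ∧ ∀ n, T (x (n + 1)) = x n} := by
    simp only [ofPred_and, ofPred_forall]
    exact (isClosed_iInter fun n => hK.isClosed.preimage (continuous_apply n)).inter
      (isClosed_iInter fun n => isClosed_eq (hT.comp (continuous_apply _)) (continuous_apply n))
  exact isCompact_iff_compactSpace.1
    ((isCompact_univ_pi fun _ => hK).of_isClosed_subset hclosed fun x hx n _ => hx.1 n)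

theorem exists_cylinder_subset (hT : Continuous T) {x : InvLim T K} {O : Set (InvLim T K)}
    (hO : O ∈ 𝓝 x) : ∃ N, ∃ V ∈ 𝓝 (x.1 N), ∀ w : InvLim T K, w.1 N ∈ V → w ∈ O := by
  obtain ⟨S, hS, hSO⟩ := mem_nhds_subtype _ _ _ |>.1 hO
  rw [nhds_pi, Filter.mem_pi] at hS
  obtain ⟨I, hI, t, ht, hIt⟩ := hS
  obtain ⟨N, hN⟩ := hI.bddAbove
  refine ⟨N, ⋂ i ∈ I, T^[N - i] ⁻¹' t i, (biInter_mem hI).2 fun i hi => ?_, fun w hw => ?_⟩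
  · refine (hT.iterate (N - i)).continuousAt.preimage_mem_nhds ?_
    rw [x.iterate_sub_apply (hN hi)]
    exact ht i
  · refine hSO (hIt fun i hi => ?_)
    simpa only [mem_preimage, w.iterate_sub_apply (hN hi)] using mem_iInter₂.1 hw i hi

theorem eventually_apply_notMem_image (hT : Continuous T) {B : Set (InvLim T K)}
    (hB : IsClosed B) {a : InvLim T K} (ha : a ∉ B) :
    ∀ᶠ m in atTop, a.1 m ∉ (fun b : InvLim T K => b.1 m) '' B := by
  obtain ⟨N, V, hV, hVB⟩ := exists_cylinder_subset hT (hB.isOpen_compl.mem_nhds ha)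
  filter_upwards [eventually_ge_atTop N]
  rintro m hm ⟨b, hb, hba : b.1 m = a.1 m⟩
  refine hVB b ?_ hb
  rw [← b.iterate_sub_apply hm, hba, a.iterate_sub_apply hm]
  exact mem_of_mem_nhds hV

theorem ordConnected_image_eval {A : Set (InvLim T K)} (hA : IsConnected A) (m : ℕ) :
    OrdConnected ((fun a : InvLim T K => a.1 m) '' A) :=
  (hA.image _ (continuous_eval m).continuousOn).isPreconnected.ordConnected

theorem isEndpointPt_of_frequently_lt (hT : Continuous T) {x : InvLim T K}
    (h : ∀ a ≠ x, ∀ b ≠ x, ∃ᶠ m in atTop, a.1 m < x.1 m ∧ b.1 m < x.1 m) : IsEndpointPt x := by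
  intro A B hA hA' hB hB' hxA hxB
  by_contra! ⟨hAB, hBA⟩
  obtain ⟨a, ha, haB⟩ := not_subset.1 hAB
  obtain ⟨b, hb, hbA⟩ := not_subset.1 hBA
  obtain ⟨m, ⟨hax, hbx⟩, hamB, hbmA⟩ :=
    ((h a (ne_of_mem_of_not_mem hxB haB).symm b (ne_of_mem_of_not_mem hxA hbA).symm).and_eventually
      ((eventually_apply_notMem_image hT hB.isClosed haB).and
        (eventually_apply_notMem_image hT hA.isClosed hbA))).exists
  rcases le_total (a.1 m) (b.1 m) with hab | hba
  · exact hbmA ((ordConnected_image_eval hA' m).out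
      (mem_image_of_mem _ ha) (mem_image_of_mem _ hxA) ⟨hab, hbx.le⟩)
  · exact hamB ((ordConnected_image_eval hB' m).out
      (mem_image_of_mem _ hb) (mem_image_of_mem _ hxB) ⟨hba, hax.le⟩)

theorem exists_seq_lt_isEndpointPt_of_frequently_lt (hT : Continuous T) {b : ℝ}
    (hKb : K ⊆ Iic b) :
    ∃ t : ℕ → ℝ, (∀ m, t m < b) ∧
      ∀ x : InvLim T K, (∃ᶠ m in atTop, t m < x.1 m) → IsEndpointPt x := by
  obtain ⟨t, htb, ht⟩ := exists_seq_lt_forall_dist_iterate_lt hT b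
  refine ⟨t, htb, fun x hx => isEndpointPt_of_frequently_lt hT fun a ha a' ha' => ?_⟩
  have hlt (w : InvLim T K) (hw : w ≠ x) : ∀ᶠ m in atTop, t m < x.1 m → w.1 m < x.1 m := by
    obtain ⟨i, hi⟩ := Function.ne_iff.1 (Subtype.coe_injective.ne hw)
    have hsmall : ∀ᶠ m : ℕ in atTop, 1 / ((m : ℝ) + 1) < dist (w.1 i) (x.1 i) / 2 :=
      tendsto_one_div_add_atTop_nhds_zero_nat.eventually_lt_const (half_pos (dist_pos.2 hi))
    filter_upwards [eventually_ge_atTop i, hsmall] with m him hm htx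
    by_contra! hxw
    have hdist (u : InvLim T K) (hu : t m < u.1 m) :
        dist (u.1 i) (T^[m - i] b) < 1 / ((m : ℝ) + 1) := by
      rw [← u.iterate_sub_apply him]
      exact ht m _ ⟨hu, hKb (u.2.1 m)⟩ _ (Nat.sub_le m i)
    linarith [dist_triangle_right (w.1 i) (x.1 i) (T^[m - i] b), hdist x htx,
      hdist w (htx.trans_le hxw)]
  refine hx.mp ?_
  filter_upwards [hlt a ha, hlt a' ha'] with m h h' htx using ⟨h htx, h' htx⟩

end InvLim

/-- The folding points of `lim←(K, T)`, when `T` has the critical point `c`: the backward orbits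
that stay in `ω(c)`. -/
def foldingSet (T : ℝ → ℝ) (K : Set ℝ) (c : ℝ) : Set (InvLim T K) :=
  {x | ∀ n, x.1 n ∈ omegaSet T c}

section FoldingSet

variable {T : ℝ → ℝ} {K : Set ℝ} {c : ℝ}

theorem isClosed_foldingSet : IsClosed (foldingSet T K c) := by
  simp only [foldingSet, ofPred_forall]
  exact isClosed_iInter fun n => isClosed_omegaSet.preimage (InvLim.continuous_eval n)

theorem exists_mem_foldingSet_apply_eq (hT : Continuous T) (hK : IsCompact K)
    (hcK : ∀ n, T^[n] c ∈ K) {y : ℝ} (hy : y ∈ omegaSet T c) (m : ℕ) :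
    ∃ w ∈ foldingSet T K c, w.1 m = y := by
  have hsurj := surjOn_omegaSet hT hK hcK
  set g := Function.invFunOn T (omegaSet T c)
  have hg (n : ℕ) : g^[n] y ∈ omegaSet T c := hsurj.mapsTo_invFunOn.iterate n hy
  have hTg (n : ℕ) : T (g^[n + 1] y) = g^[n] y := by
    rw [Function.iterate_succ_apply']
    exact hsurj.rightInvOn_invFunOn (hg n)
  have hmem (n : ℕ) : T^[m] (g^[n] y) ∈ omegaSet T c := (mapsTo_omegaSet hT).iterate m (hg n)
  have hωK := omegaSet_subset hK.isClosed hcK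
  refine ⟨⟨fun n => T^[m] (g^[n] y), fun n => hωK (hmem n), fun n => ?_⟩, hmem, ?_⟩
  · rw [← Function.iterate_succ_apply' T, Function.iterate_succ_apply, hTg]
  · simpa only [zero_add, Function.iterate_zero, id_eq] using InvLim.iterate_apply_add
      (⟨fun n => g^[n] y, fun n => hωK (hg n), hTg⟩ : InvLim T K) 0 m

theorem accPt_foldingSet (hT : Continuous T) (hK : IsCompact K) (hcK : ∀ n, T^[n] c ∈ K)
    (hinf : Function.Injective fun n : ℕ => T^[n] c) (hrec : c ∈ omegaSet T c) (j : ℕ)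
    (z : foldingSet T K c) : AccPt z (𝓟 {w : foldingSet T K c | ∃ m ≥ j, w.1.1 m = c}) := by
  refine accPt_iff_nhds.2 fun O hO => ?_
  obtain ⟨O', hO', hOO'⟩ := mem_nhds_subtype _ _ _ |>.1 hO
  obtain ⟨N, V, hV, hVO⟩ := InvLim.exists_cylinder_subset hT hO'
  have hfreq : ∃ᶠ k in atTop, T^[k] c ∈ V := (mem_omegaSet_iff_mapClusterPt.1 (z.2 N)).frequently hV
  have hne : ∀ᶠ k in atTop, T^[k] c ≠ z.1.1 N := by
    rw [← Nat.cofinite_eq_atTop]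
    exact hinf.tendsto_cofinite.eventually (eventually_cofinite_ne _)
  obtain ⟨k, hkV, hkz, hjk⟩ := (hfreq.and_eventually (hne.and (eventually_ge_atTop j))).exists
  obtain ⟨w, hwF, hwc⟩ := exists_mem_foldingSet_apply_eq hT hK hcK hrec (N + k)
  have hwN : w.1 N = T^[k] c := by rw [← w.iterate_apply_add N k, hwc]
  refine ⟨⟨w, hwF⟩, ⟨hOO' (hVO w (hwN ▸ hkV)), N + k, by lia, hwc⟩, ?_⟩
  rintro rfl
  exact hkz hwN.symm

theorem perfectSpace_foldingSet (hT : Continuous T) (hK : IsCompact K) (hcK : ∀ n, T^[n] c ∈ K)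
    (hinf : Function.Injective fun n : ℕ => T^[n] c) (hrec : c ∈ omegaSet T c) :
    PerfectSpace (foldingSet T K c) :=
  ⟨fun z _ => (accPt_foldingSet hT hK hcK hinf hrec 0 z).mono (principal_mono.2 (subset_univ _))⟩

theorem baireSpace_foldingSet (hT : Continuous T) (hK : IsCompact K) :
    BaireSpace (foldingSet T K c) := by
  have := InvLim.compactSpace hT hK
  have := isCompact_iff_compactSpace.1 (isClosed_foldingSet (T := T) (K := K) (c := c)).isCompact
  infer_instance

theorem isEndpointPt_mem_residual_foldingSet (hT : Continuous T) (hK : IsCompact K)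
    (hcK : ∀ n, T^[n] c ∈ K) (hmax : K ⊆ Iic (T c))
    (hinf : Function.Injective fun n : ℕ => T^[n] c) (hrec : c ∈ omegaSet T c) :
    {w : foldingSet T K c | IsEndpointPt w.1} ∈ residual (foldingSet T K c) := by
  obtain ⟨t, htc, ht⟩ := InvLim.exists_seq_lt_isEndpointPt_of_frequently_lt hT hmax
  let U (j : ℕ) : Set (foldingSet T K c) := {w | ∃ m ≥ j, t m < w.1.1 m}
  have hUopen (j : ℕ) : IsOpen (U j) := by
    simp only [U, ofPred_exists, ofPred_and]
    exact isOpen_iUnion fun m => isOpen_const.inter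
      (isOpen_lt continuous_const ((InvLim.continuous_eval m).comp continuous_subtype_val))
  have hUdense (j : ℕ) : Dense (U j) := by
    intro z
    have hz := (accPt_foldingSet hT hK hcK hinf hrec (j + 1) z).clusterPt.mem_closure
    refine closure_mono ?_ hz
    rintro w ⟨_ | m, hm, hwm⟩
    · lia
    · exact ⟨m, by lia, by rw [← w.1.2.2 m, hwm]; exact htc m⟩
  filter_upwards [countable_iInter_mem.2 fun j => residual_of_dense_open (hUopen j) (hUdense j)]
    with w hw
  exact ht w.1 (frequently_atTop.2 (mem_iInter.1 hw))

end FoldingSet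

section Arc

theorem not_isEndpointPt_of_arc {Z : Type*} [TopologicalSpace Z] {a b : ℝ} {γ : Icc a b → Z}
    (hγ : Continuous γ) (hinj : Function.Injective γ) {p : Icc a b} (hap : a < p) (hpb : p < b) :
    ¬ IsEndpointPt (γ p) := by
  intro hp
  have hleft : Icc a p ⊆ Icc a b := Icc_subset_Icc_right p.2.2
  have hright : Icc (p : ℝ) b ⊆ Icc a b := Icc_subset_Icc_left p.2.1
  have := Subtype.connectedSpace (isConnected_Icc hap.le)
  have := Subtype.connectedSpace (isConnected_Icc hpb.le)
  have hγl := hγ.comp (continuous_inclusion hleft)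
  have hγr := hγ.comp (continuous_inclusion hright)
  rcases hp (range (γ ∘ inclusion hleft)) (range (γ ∘ inclusion hright))
    (isCompact_range hγl) (isConnected_range hγl) (isCompact_range hγr) (isConnected_range hγr)
    ⟨⟨p, hap.le, le_rfl⟩, rfl⟩ ⟨⟨p, le_rfl, hpb.le⟩, rfl⟩ with hsub | hsub
  · obtain ⟨y, hy⟩ := hsub ⟨⟨a, le_rfl, hap.le⟩, rfl⟩
    have hya : (y : ℝ) = a := congrArg Subtype.val (hinj hy)
    linarith [y.2.1]
  · obtain ⟨y, hy⟩ := hsub ⟨⟨b, hpb.le, le_rfl⟩, rfl⟩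
    have hyb : (y : ℝ) = b := congrArg Subtype.val (hinj hy)
    linarith [y.2.2]

/-- Through every point of `K` there passes a continuous inverse branch of `T` over `K`. The
branch is a function on all of `ℝ`, and it may take `K` outside `K`. -/
def HasInverseBranches (T : ℝ → ℝ) (K : Set ℝ) : Prop :=
  ∀ z ∈ K, ∃ f : ℝ → ℝ, Continuous f ∧ f (T z) = z ∧ RightInvOn f T K

variable {T : ℝ → ℝ} {K : Set ℝ}

theorem HasInverseBranches.exists_lift (hT : HasInverseBranches T K) (x : InvLim T K) (n : ℕ) :
    ∃ h : ℕ → ℝ → ℝ, (∀ k, Continuous (h k)) ∧ h 0 = id ∧ (∀ k, h k (x.1 n) = x.1 (n + k)) ∧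
      ∀ k y, h k y ∈ K → T (h (k + 1) y) = h k y := by
  choose f hf hfT hTf using fun k => hT (x.1 (n + k + 1)) (x.2.1 _)
  let h (k : ℕ) : ℝ → ℝ := Nat.rec id (fun i g => f i ∘ g) k
  have hsucc (k : ℕ) (y : ℝ) : h (k + 1) y = f k (h k y) := rfl
  refine ⟨h, fun k => ?_, rfl, fun k => ?_, fun k y hy => hTf k hy⟩
  · induction k with
    | zero => exact continuous_id
    | succ k ih => exact (hf k).comp ih
  · induction k with
    | zero => rfl
    | succ k ih => rw [hsucc, ih, ← x.2.2, add_assoc n k 1, ← add_assoc, hfT]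

theorem subset_Icc_of_ordConnected {S : Set ℝ} (hS : OrdConnected S) {a b q : ℝ}
    (ha : a ∉ S) (hb : b ∉ S) (hqS : q ∈ S) (hq : q ∈ Icc a b) : S ⊆ Icc a b := by
  intro y hy
  constructor <;> by_contra! hlt
  · exact ha (hS.out hy hqS ⟨hlt.le, hq.1⟩)
  · exact hb (hS.out hqS hy ⟨hq.2, hlt.le⟩)

theorem mapsTo_and_rightInvOn_lift {W : Set ℝ} (hW : MapsTo T W W) {a b : ℝ} (ha : a ∈ W)
    (hb : b ∈ W) {h : ℕ → ℝ → ℝ} (hcont : ∀ k, Continuous (h k)) (hzero : h 0 = id)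
    (hlift : ∀ k y, h k y ∈ Icc a b → T (h (k + 1) y) = h k y) {J : Set ℝ}
    (hJ : IsPreconnected J) (hJW : Disjoint J W) {p : ℝ} (hp : p ∈ J)
    (hpK : ∀ k, h k p ∈ Icc a b) (k : ℕ) :
    MapsTo (h k) J (Icc a b) ∧ RightInvOn (h k) T^[k] J := by
  have hmaps (k : ℕ) (hk : RightInvOn (h k) T^[k] J) : MapsTo (h k) J (Icc a b) := by
    have hnot {w : ℝ} (hw : w ∈ W) : w ∉ h k '' J := by
      rintro ⟨y, hy, rfl⟩
      exact disjoint_left.1 hJW hy (hk hy ▸ hW.iterate k hw)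
    exact image_subset_iff.1 (subset_Icc_of_ordConnected
      (hJ.image _ (hcont k).continuousOn).ordConnected (hnot ha) (hnot hb)
      (mem_image_of_mem _ hp) (hpK k))
  have hright : RightInvOn (h k) T^[k] J := by
    induction k with
    | zero => exact fun y _ => congrFun hzero y
    | succ k ih =>
      intro y hy
      rw [Function.iterate_succ_apply, hlift k y (hmaps k ih hy), ih hy]
  exact ⟨hmaps k hright, hright⟩

theorem apply_mem_of_isEndpointPt (hT : Continuous T) {a b : ℝ}
    (hbranch : HasInverseBranches T (Icc a b)) (hmaps : MapsTo T (Icc a b) (Icc a b))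
    {W : Set ℝ} (hWclosed : IsClosed W) (hW : MapsTo T W W) (ha : a ∈ W) (hb : b ∈ W)
    {x : InvLim T (Icc a b)} (hx : IsEndpointPt x) (n : ℕ) : x.1 n ∈ W := by
  by_contra hxW
  obtain ⟨ε, hε, hball⟩ :=
    Metric.nhds_basis_closedBall.mem_iff.1 (hWclosed.isOpen_compl.mem_nhds hxW)
  rw [Real.closedBall_eq_Icc] at hball
  set p := x.1 n
  have hp : p ∈ Icc (p - ε) (p + ε) := ⟨by linarith, by linarith⟩
  obtain ⟨h, hcont, hzero, hhp, hlift⟩ := hbranch.exists_lift x n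
  have hJ := mapsTo_and_rightInvOn_lift hW ha hb hcont hzero hlift isPreconnected_Icc
    (disjoint_left.2 fun y hy => hball hy) hp fun k => (hhp k).symm ▸ x.2.1 _
  let γ (y : Icc (p - ε) (p + ε)) : InvLim T (Icc a b) :=
    ⟨fun i => T^[n] (h i y), fun i => hmaps.iterate n ((hJ i).1 y.2), fun i => by
      rw [← Function.iterate_succ_apply' T, Function.iterate_succ_apply,
        hlift i y ((hJ i).1 y.2)]⟩
  have hγ : Continuous γ := Continuous.subtype_mk (continuous_pi fun i =>
    (hT.iterate n).comp ((hcont i).comp continuous_subtype_val)) _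
  have hinj : Function.Injective γ := fun y z hyz => Subtype.ext <| by
    rw [← (hJ n).2 y.2, ← (hJ n).2 z.2]
    exact congrFun (congrArg Subtype.val hyz) n
  have hγp : γ ⟨p, hp⟩ = x := Subtype.ext <| funext fun i => by
    change T^[n] (h i p) = x.1 i
    rw [hhp, add_comm, x.iterate_apply_add]
  exact not_isEndpointPt_of_arc hγ hinj (p := ⟨p, hp⟩) (sub_lt_self p hε)
    (lt_add_of_pos_right p hε) (hγp ▸ hx)

end Arc

section TentMap

/-- The tent map of slope `s`, with critical point `1 / 2`. -/
def tentMap (s x : ℝ) : ℝ :=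
  min (s * x) (s * (1 - x))

/-- The core of the tent map: the interval `[c₂, c₁]` between the second and the first image of
the critical point. -/
def tentCore (s : ℝ) : Set ℝ :=
  Icc ((tentMap s)^[2] (1 / 2)) (tentMap s (1 / 2))

variable {s : ℝ}

theorem continuous_tentMap : Continuous (tentMap s) := by
  unfold tentMap
  fun_prop

theorem tentMap_half : tentMap s (1 / 2) = s / 2 := by
  norm_num [tentMap, div_eq_mul_inv]

theorem tentMap_of_le (hs : 0 ≤ s) {x : ℝ} (hx : x ≤ 1 / 2) : tentMap s x = s * x :=
  min_eq_left (mul_le_mul_of_nonneg_left (by linarith) hs)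

theorem tentMap_of_ge (hs : 0 ≤ s) {x : ℝ} (hx : 1 / 2 ≤ x) : tentMap s x = s * (1 - x) :=
  min_eq_right (mul_le_mul_of_nonneg_left (by linarith) hs)

theorem tentCore_eq (hs : 1 ≤ s) : tentCore s = Icc (s * (1 - s / 2)) (s / 2) := by
  rw [tentCore, Function.iterate_succ_apply, Function.iterate_one, tentMap_half,
    tentMap_of_ge (by linarith) (by linarith)]

theorem half_mem_tentCore (hs : 1 ≤ s) : 1 / 2 ∈ tentCore s := by
  rw [tentCore_eq hs]
  exact ⟨by linarith [sq_nonneg (s - 1)], by linarith⟩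

theorem mapsTo_tentCore (hs : s ∈ Icc 1 2) : MapsTo (tentMap s) (tentCore s) (tentCore s) := by
  obtain ⟨h1, h2⟩ := hs
  rw [tentCore_eq h1]
  rintro x ⟨hx, hx'⟩
  rcases le_total x (1 / 2) with h | h
  · rw [tentMap_of_le (by linarith) h]
    exact ⟨by nlinarith, by nlinarith⟩
  · rw [tentMap_of_ge (by linarith) h]
    exact ⟨by nlinarith, by nlinarith⟩

theorem hasInverseBranches_tentMap (hs : 0 < s) {K : Set ℝ} (hK : K ⊆ Iic (s / 2)) :
    HasInverseBranches (tentMap s) K := by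
  have hhalf {y : ℝ} (hy : y ∈ K) : y / s ≤ 1 / 2 := by
    rw [div_le_iff₀ hs]
    linarith [mem_Iic.1 (hK hy)]
  intro z _
  rcases le_total z (1 / 2) with hz | hz
  · refine ⟨fun y => y / s, by fun_prop, ?_, fun y hy => ?_⟩
    · simp only [tentMap_of_le hs.le hz, mul_div_cancel_left₀ _ hs.ne']
    · rw [tentMap_of_le hs.le (hhalf hy), mul_div_cancel₀ _ hs.ne']
  · refine ⟨fun y => 1 - y / s, by fun_prop, ?_, fun y hy => ?_⟩
    · simp only [tentMap_of_ge hs.le hz, mul_div_cancel_left₀ _ hs.ne', sub_sub_cancel]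
    · rw [tentMap_of_ge hs.le (by linarith [hhalf hy]), sub_sub_cancel, mul_div_cancel₀ _ hs.ne']

end TentMap

theorem stmt11_general (s : ℝ) (hs : s ∈ Icc 1 2) (T : ℝ → ℝ)
    (hT : ∀ x, T x = min (s * x) (s * (1 - x))) (c : ℝ) (hc : c = 1 / 2)
    (hinf : Function.Injective fun n : ℕ => T^[n] c) (hrec : c ∈ omegaSet T c)
    (K : Set ℝ) (hK : K = Icc (T^[2] c) (T c)) (E F : Set (InvLim T K))
    (hE : E = {x : InvLim T K | IsEndpointPt x})
    (hF : F = {x : InvLim T K | ∀ n, x.1 n ∈ omegaSet T c}) :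
    ¬ E.Countable ∧ (∀ x ∈ E, x ∈ closure (E \ {x})) ∧ F ⊆ closure E := by
  obtain rfl : T = tentMap s := funext hT
  obtain rfl : K = tentCore s := by rw [hK, hc, tentCore]
  obtain rfl : F = foldingSet (tentMap s) (tentCore s) c := hF
  subst hc hE
  set F := foldingSet (tentMap s) (tentCore s) (1 / 2)
  have hTc : Continuous (tentMap s) := continuous_tentMap
  have hKc : IsCompact (tentCore s) := isCompact_Icc
  have hmaps := mapsTo_tentCore hs
  have hcK (n : ℕ) := hmaps.iterate n (half_mem_tentCore hs.1)
  have hω := mapsTo_omegaSet (c := 1 / 2) hTc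
  have hbranch : HasInverseBranches (tentMap s) (tentCore s) :=
    hasInverseBranches_tentMap (by linarith [hs.1]) fun y hy => tentMap_half (s := s) ▸ hy.2
  have hEF (x : InvLim (tentMap s) (tentCore s)) (hx : IsEndpointPt x) : x ∈ F :=
    apply_mem_of_isEndpointPt hTc hbranch hmaps isClosed_omegaSet hω (hω.iterate 2 hrec)
      (hω hrec) hx
  have hres := isEndpointPt_mem_residual_foldingSet hTc hKc hcK (fun y hy => hy.2) hinf hrec
  have := perfectSpace_foldingSet hTc hKc hcK hinf hrec
  have := baireSpace_foldingSet (c := 1 / 2) hTc hKc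
  obtain ⟨w, hwF, -⟩ := exists_mem_foldingSet_apply_eq hTc hKc hcK hrec 0
  have : Nonempty F := ⟨⟨w, hwF⟩⟩
  have hdense : Dense {w : F | IsEndpointPt w.1} := dense_of_mem_residual hres
  have hclosure {x : InvLim (tentMap s) (tentCore s)} (hx : x ∈ F) :=
    mem_closure_diff_singleton_of_dense (E := {x | IsEndpointPt x}) hdense hx
  exact ⟨fun hcount => not_countable_of_mem_residual hres (hcount.preimage Subtype.val_injective),
    fun x hx => hclosure (hEF x hx), fun x hx => closure_mono sdiff_subset (hclosure hx)⟩

/-- If the critical point `c` of a tent map `T` is recurrent with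
infinite orbit, then the set `E` of endpoints of the core inverse limit `X′` is
uncountable; moreover `E` has no isolated points and is dense in the set `F` of
folding points. -/
theorem stmt11 (s : ℝ) (hs : s ∈ Set.Ioc (Real.sqrt 2) 2) (T : ℝ → ℝ)
    (hT : ∀ x, T x = min (s * x) (s * (1 - x))) (c : ℝ) (hc : c = 1/2)
    (hinf : Function.Injective fun n : ℕ => T^[n] c)
    (hrec : c ∈ omegaSet T c)
    (K : Set ℝ) (hK : K = Set.Icc (T^[2] c) (T c))
    (E F : Set (InvLim T K))
    (hE : E = {x : InvLim T K | IsEndpointPt x})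
    (hF : F = {x : InvLim T K | ∀ n, x.1 n ∈ omegaSet T c}) :
    ¬ E.Countable ∧ (∀ x ∈ E, x ∈ closure (E \ {x})) ∧ F ⊆ closure E :=
  stmt11_general s ⟨(Real.one_le_sqrt.2 one_le_two).trans hs.1.le, hs.2⟩ T hT c hc hinf hrec K hK
    E F hE hF
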